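/- arXiv:1703.00941 — 9 statements merged into one kernel-verified Lean document; each statement's English description precedes it below -/
import Mathlib

section
/- Let n ≥ 1 and let weights w(i,j) ∈ ℤ ∪ {+∞} be given for all 0 ≤ i < j ≤ n. Let T be the LWS table for these weights. Then for every j with 1 ≤ j ≤ n, T[j] equals the minimum, over all k ≥ 1 and all strictly increasing index sequences 0 = i_0 < i_1 < ⋯ < i_k = j, of Σ_{ℓ=1}^{k} w(i_{ℓ−1}, i_ℓ) (minimum taken in ℤ ∪ {+∞}). -/
/-- The LWS table value `T[j]` equals the minimum, over all
strictly increasing index sequences `0 = i_0 < i_1 < ⋯ < i_k = j` (`k ≥ 1`),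
of the total weight `Σ_{ℓ=1}^{k} w(i_{ℓ-1}, i_ℓ)`, where weights live in
`ℤ ∪ {+∞}` (modeled as `WithTop ℤ`). The LWS table is given by `T[0] = 0`
and `T[j] = min_{0 ≤ i < j} (T[i] + w(i,j))` for `1 ≤ j ≤ n`. -/
theorem stmt_0 (n : ℕ) (hn : 1 ≤ n) (w : ℕ → ℕ → WithTop ℤ)
    (T : ℕ → WithTop ℤ) (hT0 : T 0 = 0)
    (hT : ∀ j, 1 ≤ j → j ≤ n →
      T j = (Finset.range j).inf (fun i => T i + w i j))
    (j : ℕ) (hj1 : 1 ≤ j) (hjn : j ≤ n) :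
    (∃ k, 1 ≤ k ∧ ∃ p : ℕ → ℕ, p 0 = 0 ∧ p k = j ∧
        (∀ ℓ, ℓ < k → p ℓ < p (ℓ + 1)) ∧
        T j = ∑ ℓ ∈ Finset.range k, w (p ℓ) (p (ℓ + 1))) ∧
    (∀ k, 1 ≤ k → ∀ p : ℕ → ℕ, p 0 = 0 → p k = j →
        (∀ ℓ, ℓ < k → p ℓ < p (ℓ + 1)) →
        T j ≤ ∑ ℓ ∈ Finset.range k, w (p ℓ) (p (ℓ + 1))) := by
  constructor
  · have key : ∀ j, j ≤ n → ∃ k, ∃ p : ℕ → ℕ, p 0 = 0 ∧ p k = j ∧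
        (∀ ℓ, ℓ < k → p ℓ < p (ℓ + 1)) ∧
        T j = ∑ ℓ ∈ Finset.range k, w (p ℓ) (p (ℓ + 1)) := by
      intro j
      induction j using Nat.strong_induction_on with
      | _ j ih =>
        intro hj
        rcases Nat.eq_zero_or_pos j with h0 | hpos
        · subst h0
          exact ⟨0, fun _ => 0, rfl, rfl, by simp, by simpa using hT0⟩
        · obtain ⟨i, hi, he⟩ := Finset.exists_mem_eq_inf (Finset.range j)
            (Finset.nonempty_range_iff.mpr (by omega)) (fun i => T i + w i j)
          have hij : i < j := Finset.mem_range.mp hi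
          obtain ⟨k, p, hp0, hpk, hmono, hsum⟩ := ih i hij (by omega)
          refine ⟨k + 1, fun m => if m ≤ k then p m else j, by simpa using hp0, by simp, ?_, ?_⟩
          · intro l hl
            rcases Nat.lt_succ_iff_lt_or_eq.mp hl with h | h
            · have h1 : l ≤ k := h.le
              have h2 : l + 1 ≤ k := h
              simpa [h1, h2] using hmono l h
            · subst h
              simpa [hpk] using hij
          · rw [hT j hpos hj, he, Finset.sum_range_succ, hsum]
            congr 1
            · apply Finset.sum_congr rfl
              intro l hl
              have h : l < k := Finset.mem_range.mp hl
              have h1 : l ≤ k := h.le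
              have h2 : l + 1 ≤ k := h
              simp [h1, h2]
            · simp [hpk]
    obtain ⟨k, p, hp0, hpk, hmono, hsum⟩ := key j hjn
    refine ⟨k, ?_, p, hp0, hpk, hmono, hsum⟩
    rcases Nat.eq_zero_or_pos k with h | h
    · subst h
      omega
    · exact h
  · intro k _ p hp0 hpk hmono
    have key : ∀ k, p k ≤ n → (∀ ℓ, ℓ < k → p ℓ < p (ℓ + 1)) →
        T (p k) ≤ ∑ ℓ ∈ Finset.range k, w (p ℓ) (p (ℓ + 1)) := by
      intro k
      induction k with
      | zero => intro _ _; simp [hp0, hT0]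
      | succ k ih =>
        intro hk hm
        have hlt := hm k (Nat.lt_succ_self k)
        rw [Finset.sum_range_succ, hT (p (k + 1)) (by omega) hk]
        refine (Finset.inf_le (Finset.mem_range.mpr hlt)).trans ?_
        exact add_le_add_left (ih (by omega) (fun l hl => hm l (by omega))) _
    rw [← hpk]
    exact key k (by omega) hmono
end

section
/- Let d, W, n ≥ 1 and let a_1,…,a_n, b_1,…,b_n ∈ {−W,…,W}^d. Let O denote the all-zeros vector in ℤ^d and define vectors in ℤ^{d+2}: μ_0 = (dW, 0, O), σ_{2n+1} = (dW, dW, O), μ_i = (0, dW, a_i) and σ_i = (0, 0, O) for i = 1,…,n, and μ_{n+j} = (0, 0, O) and σ_{n+j} = (dW, 0, b_j) for j = 1,…,n. Let T be the LWS table on indices 0,…,2n+1 with weights w(i,j) = ⟨μ_i, σ_j⟩ for 0 ≤ i < j ≤ 2n+1. Then T[i] = 0 for all i = 1,…,n, and T[n+j] = min_{1 ≤ i ≤ n, 1 ≤ j′ ≤ j} ⟨a_i, b_{j′}⟩ for all j = 1,…,n. -/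
/-- Standard inner product on `ℤ^d`. -/
def dotInt {d : ℕ} (u v : Fin d → ℤ) : ℤ := ∑ k, u k * v k

/-- Standard inner product on `ℤ^{d+2}`, viewing a vector as a pair of scalar
coordinates followed by a vector in `ℤ^d`. -/
def ip3 {d : ℕ} (u v : ℤ × ℤ × (Fin d → ℤ)) : ℤ :=
  u.1 * v.1 + u.2.1 * v.2.1 + dotInt u.2.2 v.2.2

/-- In the reduction from `MinInnProd` to `LowRankLWS`, the LWS
table on indices `0,…,2n+1` with weights `w(i,j) = ⟨μ_i, σ_j⟩` satisfies
`T[i] = 0` for `1 ≤ i ≤ n`, and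
`T[n+j] = min_{1 ≤ i ≤ n, 1 ≤ j' ≤ j} ⟨a_i, b_{j'}⟩` for `1 ≤ j ≤ n`. -/
theorem stmt_1 (d : ℕ) (hd : 1 ≤ d) (W : ℤ) (hW : 1 ≤ W) (n : ℕ) (hn : 1 ≤ n)
    (a b : ℕ → Fin d → ℤ)
    (ha : ∀ i, 1 ≤ i → i ≤ n → ∀ k, |a i k| ≤ W)
    (hb : ∀ j, 1 ≤ j → j ≤ n → ∀ k, |b j k| ≤ W)
    (μ σ : ℕ → ℤ × ℤ × (Fin d → ℤ))
    (hμ0 : μ 0 = ((d : ℤ) * W, 0, 0))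
    (hσtop : σ (2 * n + 1) = ((d : ℤ) * W, (d : ℤ) * W, 0))
    (hμa : ∀ i, 1 ≤ i → i ≤ n → μ i = (0, (d : ℤ) * W, a i))
    (hσa : ∀ i, 1 ≤ i → i ≤ n → σ i = (0, 0, 0))
    (hμb : ∀ j, 1 ≤ j → j ≤ n → μ (n + j) = (0, 0, 0))
    (hσb : ∀ j, 1 ≤ j → j ≤ n → σ (n + j) = ((d : ℤ) * W, 0, b j))
    (T : ℕ → WithTop ℤ) (hT0 : T 0 = 0)
    (hT : ∀ j, 1 ≤ j → j ≤ 2 * n + 1 →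
      T j = (Finset.range j).inf (fun i => T i + ((ip3 (μ i) (σ j) : ℤ) : WithTop ℤ))) :
    (∀ i, 1 ≤ i → i ≤ n → T i = 0) ∧
    (∀ j, (hj1 : 1 ≤ j) → j ≤ n →
      T (n + j) = ((Finset.Icc 1 n ×ˢ Finset.Icc 1 j).inf'
          ((Finset.nonempty_Icc.mpr hn).product (Finset.nonempty_Icc.mpr hj1))
          (fun p => dotInt (a p.1) (b p.2)) : ℤ)) := by
  have h1 : ∀ i, i ≤ n → T i = 0 := by
    intro i
    induction i using Nat.strong_induction_on with
    | _ i ih =>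
      intro hi
      rcases Nat.eq_zero_or_pos i with h0 | h0
      · rw [h0, hT0]
      · rw [hT i h0 (by omega)]
        have hz : ∀ k ∈ Finset.range i,
            T k + ((ip3 (μ k) (σ i) : ℤ) : WithTop ℤ) = 0 := by
          intro k hk
          rw [Finset.mem_range] at hk
          rw [ih k hk (by omega), hσa i h0 hi]
          simp [ip3, dotInt]
        apply le_antisymm
        · have := hz 0 (Finset.mem_range.mpr h0)
          rw [← this]
          exact Finset.inf_le (f := fun k => T k + ((ip3 (μ k) (σ i) : ℤ) : WithTop ℤ))
            (Finset.mem_range.mpr h0)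
        · apply Finset.le_inf
          intro k hk
          rw [hz k hk]
  refine ⟨fun i _ hi => h1 i hi, ?_⟩
  have hdot : ∀ i j, 1 ≤ i → i ≤ n → 1 ≤ j → j ≤ n →
      dotInt (a i) (b j) ≤ ((d : ℤ) * W) * ((d : ℤ) * W) := by
    intro i j hi hi' hj hj'
    have hs : dotInt (a i) (b j) ≤ ∑ _k : Fin d, W * W := by
      apply Finset.sum_le_sum
      intro k _
      calc a i k * b j k ≤ |a i k * b j k| := le_abs_self _
        _ = |a i k| * |b j k| := abs_mul _ _
        _ ≤ W * W := mul_le_mul (ha i hi hi' k) (hb j hj hj' k) (abs_nonneg _) (by omega)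
    have hd' : (1 : ℤ) ≤ d := by exact_mod_cast hd
    simp only [Finset.sum_const, Finset.card_univ, Fintype.card_fin, nsmul_eq_mul] at hs
    have hw : 0 ≤ W * W := mul_self_nonneg W
    have : (d : ℤ) * (W * W) ≤ d * (d * (W * W)) := by
      apply mul_le_mul_of_nonneg_left _ (by omega)
      nlinarith
    calc _ ≤ _ := hs
      _ ≤ _ := this
      _ = _ := by ring
  intro j
  induction j using Nat.strong_induction_on with
  | _ j ih =>
    intro hj1 hjn
    have hle : ∀ k, k < n + j → T (n + j) ≤ T k + ((ip3 (μ k) (σ (n + j)) : ℤ) : WithTop ℤ) := by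
      intro k hk
      rw [hT (n + j) (by omega) (by omega)]
      exact Finset.inf_le (f := fun k => T k + ((ip3 (μ k) (σ (n + j)) : ℤ) : WithTop ℤ))
        (Finset.mem_range.mpr hk)
    have hwa : ∀ k, 1 ≤ k → k ≤ n → ip3 (μ k) (σ (n + j)) = dotInt (a k) (b j) := by
      intro k hk hk'
      rw [hμa k hk hk', hσb j hj1 hjn]
      simp [ip3]
    have hwb : ∀ k, 1 ≤ k → k ≤ n → ip3 (μ (n + k)) (σ (n + j)) = 0 := by
      intro k hk hk'
      rw [hμb k hk hk']
      simp [ip3, dotInt]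
    apply le_antisymm
    · obtain ⟨p, hp, hpe⟩ := Finset.exists_mem_eq_inf'
        ((Finset.nonempty_Icc.mpr hn).product (Finset.nonempty_Icc.mpr hj1))
        (fun p : ℕ × ℕ => dotInt (a p.1) (b p.2))
      rw [hpe]
      simp only [Finset.mem_product, Finset.mem_Icc] at hp
      obtain ⟨⟨hp1, hp2⟩, hp3, hp4⟩ := hp
      rcases Nat.lt_or_ge p.2 j with hlt | hge
      · have h := hle (n + p.2) (by omega)
        rw [hwb p.2 hp3 (by omega), ih p.2 hlt hp3 (by omega)] at h
        refine h.trans ?_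
        rw [← WithTop.coe_add, add_zero, WithTop.coe_le_coe]
        exact Finset.inf'_le (fun p : ℕ × ℕ => dotInt (a p.1) (b p.2)) (b := p)
          (by simp only [Finset.mem_product, Finset.mem_Icc]; omega)
      · have he : p.2 = j := by omega
        have h := hle p.1 (by omega)
        rw [hwa p.1 hp1 hp2, h1 p.1 hp2, zero_add] at h
        rw [he]
        exact h
    · rw [hT (n + j) (by omega) (by omega)]
      apply Finset.le_inf
      intro k hk
      rw [Finset.mem_range] at hk
      rcases Nat.eq_zero_or_pos k with h0 | h0
      · rw [h0, hT0, zero_add, WithTop.coe_le_coe, hμ0, hσb j hj1 hjn]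
        refine (Finset.inf'_le (fun p : ℕ × ℕ => dotInt (a p.1) (b p.2)) (b := (1, 1))
          (by simp only [Finset.mem_product, Finset.mem_Icc]; omega)).trans ?_
        refine (hdot 1 1 le_rfl hn le_rfl (by omega)).trans ?_
        simp [ip3, dotInt]
      · rcases Nat.lt_or_ge n k with hlt | hge
        · obtain ⟨m, rfl⟩ := Nat.exists_eq_add_of_lt hlt
          rw [show n + m + 1 = n + (m + 1) by omega, hwb (m + 1) (by omega) (by omega),
            ih (m + 1) (by omega) (by omega) (by omega), ← WithTop.coe_add, add_zero,
            WithTop.coe_le_coe]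
          apply Finset.inf'_mono
          apply Finset.product_subset_product_right
          apply Finset.Icc_subset_Icc_right
          omega
        · rw [h1 k hge, hwa k h0 hge, zero_add, WithTop.coe_le_coe]
          exact Finset.inf'_le (fun p : ℕ × ℕ => dotInt (a p.1) (b p.2)) (b := (k, j))
            (by simp only [Finset.mem_product, Finset.mem_Icc]; omega)
end

section
/- Let d, W, n ≥ 1 and let a_1,…,a_n, b_1,…,b_n ∈ {−W,…,W}^d. Let O denote the all-zeros vector in ℤ^d and define vectors in ℤ^{d+2}: μ_0 = (dW, 0, O), σ_{2n+1} = (dW, dW, O), μ_i = (0, dW, a_i) and σ_i = (0, 0, O) for i = 1,…,n, and μ_{n+j} = (0, 0, O) and σ_{n+j} = (dW, 0, b_j) for j = 1,…,n. Let T be the LWS table on indices 0,…,2n+1 with weights w(i,j) = ⟨μ_i, σ_j⟩ for 0 ≤ i < j ≤ 2n+1. Then T[2n+1] = min_{1 ≤ i ≤ n, 1 ≤ j ≤ n} ⟨a_i, b_j⟩. -/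
/-- In the reduction from `MinInnProd` to `LowRankLWS`, the LWS
table on indices `0,…,2n+1` with weights `w(i,j) = ⟨μ_i, σ_j⟩` satisfies
`T[2n+1] = min_{1 ≤ i ≤ n, 1 ≤ j ≤ n} ⟨a_i, b_j⟩`. -/
theorem stmt_2 (d : ℕ) (hd : 1 ≤ d) (W : ℤ) (hW : 1 ≤ W) (n : ℕ) (hn : 1 ≤ n)
    (a b : ℕ → Fin d → ℤ)
    (ha : ∀ i, 1 ≤ i → i ≤ n → ∀ k, |a i k| ≤ W)
    (hb : ∀ j, 1 ≤ j → j ≤ n → ∀ k, |b j k| ≤ W)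
    (μ σ : ℕ → ℤ × ℤ × (Fin d → ℤ))
    (hμ0 : μ 0 = ((d : ℤ) * W, 0, 0))
    (hσtop : σ (2 * n + 1) = ((d : ℤ) * W, (d : ℤ) * W, 0))
    (hμa : ∀ i, 1 ≤ i → i ≤ n → μ i = (0, (d : ℤ) * W, a i))
    (hσa : ∀ i, 1 ≤ i → i ≤ n → σ i = (0, 0, 0))
    (hμb : ∀ j, 1 ≤ j → j ≤ n → μ (n + j) = (0, 0, 0))
    (hσb : ∀ j, 1 ≤ j → j ≤ n → σ (n + j) = ((d : ℤ) * W, 0, b j))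
    (T : ℕ → WithTop ℤ) (hT0 : T 0 = 0)
    (hT : ∀ j, 1 ≤ j → j ≤ 2 * n + 1 →
      T j = (Finset.range j).inf (fun i => T i + ((ip3 (μ i) (σ j) : ℤ) : WithTop ℤ))) :
    T (2 * n + 1) = ((Finset.Icc 1 n ×ˢ Finset.Icc 1 n).inf'
        ((Finset.nonempty_Icc.mpr hn).product (Finset.nonempty_Icc.mpr hn))
        (fun p => dotInt (a p.1) (b p.2)) : ℤ) := by
  have hdW : (1 : ℤ) ≤ d := by exact_mod_cast hd
  have hbound : ∀ i j, 1 ≤ i → i ≤ n → 1 ≤ j → j ≤ n →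
      dotInt (a i) (b j) ≤ ((d : ℤ) * W) * ((d : ℤ) * W) := by
    intro i j hi hi' hj hj'
    have h1 : dotInt (a i) (b j) ≤ ∑ _k : Fin d, W * W := by
      unfold dotInt
      apply Finset.sum_le_sum
      intro k _
      calc a i k * b j k ≤ |a i k * b j k| := le_abs_self _
        _ = |a i k| * |b j k| := abs_mul _ _
        _ ≤ W * W := mul_le_mul (ha i hi hi' k) (hb j hj hj' k) (abs_nonneg _) (by linarith)
    have h2 : ∑ _k : Fin d, W * W = (d : ℤ) * (W * W) := by simp
    rw [h2] at h1
    have h3 : (0 : ℤ) ≤ ((d : ℤ) - 1) * ((d : ℤ) * (W * W)) := by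
      apply mul_nonneg <;> [linarith; positivity]
    nlinarith
  set M : ℤ := (Finset.Icc 1 n ×ˢ Finset.Icc 1 n).inf'
        ((Finset.nonempty_Icc.mpr hn).product (Finset.nonempty_Icc.mpr hn))
        (fun p => dotInt (a p.1) (b p.2)) with hM
  have hMle : ∀ i j, 1 ≤ i → i ≤ n → 1 ≤ j → j ≤ n → M ≤ dotInt (a i) (b j) := by
    intro i j hi hi' hj hj'
    exact Finset.inf'_le (fun p : ℕ × ℕ => dotInt (a p.1) (b p.2)) (b := (i, j))
      (by simp [hi, hi', hj, hj'])
  have hMbig : M ≤ ((d : ℤ) * W) * ((d : ℤ) * W) :=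
    (hMle 1 1 le_rfl hn le_rfl hn).trans (hbound 1 1 le_rfl hn le_rfl hn)
  obtain ⟨p, hp, hpM⟩ := Finset.exists_mem_eq_inf' (s := Finset.Icc 1 n ×ˢ Finset.Icc 1 n)
        ((Finset.nonempty_Icc.mpr hn).product (Finset.nonempty_Icc.mpr hn))
        (fun p => dotInt (a p.1) (b p.2))
  rw [← hM] at hpM
  simp only [Finset.mem_product, Finset.mem_Icc] at hp
  obtain ⟨⟨hp1, hp1'⟩, hp2, hp2'⟩ := hp
  have hTa : ∀ i, i ≤ n → T i = 0 := by
    intro i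
    induction i using Nat.strong_induction_on with
    | _ i ih =>
      intro hi
      rcases Nat.eq_zero_or_pos i with h0 | h0
      · rw [h0, hT0]
      · have hz : ∀ k ∈ Finset.range i,
            T k + ((ip3 (μ k) (σ i) : ℤ) : WithTop ℤ) = 0 := by
          intro k hk
          have hk' := Finset.mem_range.mp hk
          rw [ih k hk' (by omega), hσa i h0 hi]
          simp [ip3, dotInt]
        rw [hT i h0 (by omega), Finset.inf_congr rfl hz]
        exact Finset.inf_const (Finset.nonempty_range_iff.mpr (by omega)) _
  have hlow : ∀ k, n < k → k ≤ 2 * n + 1 → (M : WithTop ℤ) ≤ T k := by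
    intro k
    induction k using Nat.strong_induction_on with
    | _ k ih =>
      intro hk hk'
      rw [hT k (by omega) hk']
      apply Finset.le_inf
      intro i hi
      have hi := Finset.mem_range.mp hi
      by_cases hin : i ≤ n
      · rw [hTa i hin, zero_add]
        refine WithTop.coe_le_coe.mpr ?_
        by_cases htop : k = 2 * n + 1
        · rw [htop, hσtop]
          rcases Nat.eq_zero_or_pos i with h0 | h0
          · rw [h0, hμ0]; simpa [ip3, dotInt] using hMbig
          · rw [hμa i h0 hin]; simpa [ip3, dotInt] using hMbig
        · obtain ⟨j, rfl⟩ : ∃ j, k = n + j := ⟨k - n, by omega⟩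
          rw [hσb j (by omega) (by omega)]
          rcases Nat.eq_zero_or_pos i with h0 | h0
          · rw [h0, hμ0]; simpa [ip3, dotInt] using hMbig
          · rw [hμa i h0 hin]
            simpa [ip3] using hMle i j h0 hin (by omega) (by omega)
      · have h := ih i hi (by omega) (by omega)
        obtain ⟨j, rfl⟩ : ∃ j, i = n + j := ⟨i - n, by omega⟩
        rw [hμb j (by omega) (by omega)]
        simpa [ip3, dotInt] using h
  apply le_antisymm
  · have h1 : T (2 * n + 1) ≤ T (n + p.2) := by
      rw [hT (2 * n + 1) (by omega) le_rfl]
      refine (Finset.inf_le (Finset.mem_range.mpr (show n + p.2 < 2 * n + 1 by omega))).trans ?_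
      rw [hμb p.2 hp2 hp2']
      simp [ip3, dotInt]
    refine h1.trans ?_
    rw [hT (n + p.2) (by omega) (by omega)]
    refine (Finset.inf_le (Finset.mem_range.mpr (show p.1 < n + p.2 by omega))).trans ?_
    rw [hTa p.1 hp1', zero_add, hpM, hμa p.1 hp1 hp1', hσb p.2 hp2 hp2']
    simp [ip3]
  · exact hlow _ (by omega) le_rfl
end

section
/- Let n, d ≥ 1 and let a_1,…,a_n, b_1,…,b_n ∈ ℤ^d. For i, j ∈ {1,…,n} define a′_i = (n·a_i, (i−1)·n, −1) ∈ ℤ^{d+2} and b′_j = (n·b_j, −1, j−1) ∈ ℤ^{d+2}. Then ⟨a′_i, b′_j⟩ = n²·⟨a_i, b_j⟩ − (i−1)·n − (j−1), and for every r ∈ ℤ and every pair i, j ∈ {1,…,n}: ⟨a′_i, b′_j⟩ ≤ r·n² if and only if ⟨a_i, b_j⟩ ≤ r. -/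
/-- Standard inner product on `ℤ^{d+2}`, viewing a vector as a vector in `ℤ^d`
followed by two scalar coordinates. -/
def ipVec2 {d : ℕ} (u v : (Fin d → ℤ) × ℤ × ℤ) : ℤ :=
  dotInt u.1 v.1 + u.2.1 * v.2.1 + u.2.2 * v.2.2

/-- For `a′_i = (n·a_i, (i−1)·n, −1)` and `b′_j = (n·b_j, −1, j−1)`
in `ℤ^{d+2}`, we have `⟨a′_i, b′_j⟩ = n²·⟨a_i, b_j⟩ − (i−1)·n − (j−1)`, and for
every `r ∈ ℤ`: `⟨a′_i, b′_j⟩ ≤ r·n²` iff `⟨a_i, b_j⟩ ≤ r`. -/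
theorem stmt_4 (n d : ℕ) (hn : 1 ≤ n) (hd : 1 ≤ d)
    (a b : ℕ → Fin d → ℤ)
    (a' b' : ℕ → (Fin d → ℤ) × ℤ × ℤ)
    (ha' : ∀ i, 1 ≤ i → i ≤ n →
      a' i = (fun k => (n : ℤ) * a i k, ((i : ℤ) - 1) * (n : ℤ), -1))
    (hb' : ∀ j, 1 ≤ j → j ≤ n →
      b' j = (fun k => (n : ℤ) * b j k, -1, (j : ℤ) - 1)) :
    ∀ i j, 1 ≤ i → i ≤ n → 1 ≤ j → j ≤ n →
      (ipVec2 (a' i) (b' j)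
          = (n : ℤ) ^ 2 * dotInt (a i) (b j) - ((i : ℤ) - 1) * (n : ℤ) - ((j : ℤ) - 1)) ∧
      (∀ r : ℤ, ipVec2 (a' i) (b' j) ≤ r * (n : ℤ) ^ 2 ↔ dotInt (a i) (b j) ≤ r) := by
  intro i j hi1 hin hj1 hjn
  have key : ipVec2 (a' i) (b' j)
      = (n : ℤ) ^ 2 * dotInt (a i) (b j) - ((i : ℤ) - 1) * (n : ℤ) - ((j : ℤ) - 1) := by
    rw [ha' i hi1 hin, hb' j hj1 hjn]
    have h : dotInt (fun k => (n : ℤ) * a i k) (fun k => (n : ℤ) * b j k)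
        = (n : ℤ) ^ 2 * dotInt (a i) (b j) := by
      unfold dotInt
      rw [Finset.mul_sum]
      exact Finset.sum_congr rfl fun k _ => by ring
    simp only [ipVec2, h]
    ring
  refine ⟨key, fun r => ?_⟩
  rw [key]
  have hn' : (1 : ℤ) ≤ n := by exact_mod_cast hn
  have hi1' : (1 : ℤ) ≤ i := by exact_mod_cast hi1
  have hin' : (i : ℤ) ≤ n := by exact_mod_cast hin
  have hj1' : (1 : ℤ) ≤ j := by exact_mod_cast hj1
  have hjn' : (j : ℤ) ≤ n := by exact_mod_cast hjn
  generalize dotInt (a i) (b j) = D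
  have hsq : (0 : ℤ) ≤ (n : ℤ) ^ 2 := by positivity
  constructor
  · intro h
    by_contra! hlt
    have h1 : (n : ℤ) ^ 2 * (r + 1) ≤ (n : ℤ) ^ 2 * D :=
      mul_le_mul_of_nonneg_left (by omega) hsq
    have h2 : ((i : ℤ) - 1) * n ≤ ((n : ℤ) - 1) * n :=
      mul_le_mul_of_nonneg_right (by omega) (by omega)
    nlinarith
  · intro h
    have h1 : (n : ℤ) ^ 2 * D ≤ (n : ℤ) ^ 2 * r := mul_le_mul_of_nonneg_left h hsq
    have h2 : 0 ≤ ((i : ℤ) - 1) * n := mul_nonneg (by omega) (by omega)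
    linarith
end

section
/- Let n ≥ 1, W ≥ 0, and M = 2W+1. Let a = (a_0,…,a_{n−1}) and b = (b_0,…,b_{n−1}) be integer vectors with 2M ≤ a_i ≤ 3M and 0 ≤ b_i ≤ M for all i. Define coin weights w_1,…,w_{6n} by: w_i = 4M for 1 ≤ i ≤ n; w_{n+i} = a_{n−i} for 1 ≤ i ≤ n; w_{2n+i} = 4M for 1 ≤ i ≤ n; w_{3n+i} = b_{n−i} for 1 ≤ i ≤ n; and w_i = 4M for 4n < i ≤ 6n. Let T be the coin-change table for these weights on indices 0,…,6n. Then: T[i] = 4M for 1 ≤ i ≤ n; T[n+i] = a_{n−i} for 1 ≤ i ≤ n; T[2n+i] = 4M for 1 ≤ i ≤ n; and T[3n+i] = b_{n−i} for 1 ≤ i ≤ n. -/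
/-- In the reduction from `(min,+)`-convolution to the coin change
problem, with `M = 2W+1`, `2M ≤ a_i ≤ 3M`, `0 ≤ b_i ≤ M`, and the coin weights
`w = (4M)^n ∘ (a_{n−1},…,a_0) ∘ (4M)^n ∘ (b_{n−1},…,b_0) ∘ (4M)^{2n}`, the
coin-change table `T` (with `T[0] = 0` and `T[j] = min_{1≤k≤j} (T[j−k] + w_k)`)
satisfies `T[i] = 4M`, `T[n+i] = a_{n−i}`, `T[2n+i] = 4M`, and
`T[3n+i] = b_{n−i}` for all `1 ≤ i ≤ n`. -/
theorem stmt_6 (n : ℕ) (hn : 1 ≤ n) (W M : ℤ) (hW : 0 ≤ W) (hM : M = 2 * W + 1)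
    (a b : ℕ → ℤ)
    (ha : ∀ i, i < n → 2 * M ≤ a i ∧ a i ≤ 3 * M)
    (hb : ∀ i, i < n → 0 ≤ b i ∧ b i ≤ M)
    (w : ℕ → ℤ)
    (hw1 : ∀ i, 1 ≤ i → i ≤ n → w i = 4 * M)
    (hw2 : ∀ i, 1 ≤ i → i ≤ n → w (n + i) = a (n - i))
    (hw3 : ∀ i, 1 ≤ i → i ≤ n → w (2 * n + i) = 4 * M)
    (hw4 : ∀ i, 1 ≤ i → i ≤ n → w (3 * n + i) = b (n - i))
    (hw5 : ∀ i, 4 * n < i → i ≤ 6 * n → w i = 4 * M)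
    (T : ℕ → ℤ) (hT0 : T 0 = 0)
    (hT : ∀ j, (hj : 1 ≤ j) → j ≤ 6 * n →
      T j = (Finset.Icc 1 j).inf' (Finset.nonempty_Icc.mpr hj)
        (fun k => T (j - k) + w k)) :
    (∀ i, 1 ≤ i → i ≤ n → T i = 4 * M) ∧
    (∀ i, 1 ≤ i → i ≤ n → T (n + i) = a (n - i)) ∧
    (∀ i, 1 ≤ i → i ≤ n → T (2 * n + i) = 4 * M) ∧
    (∀ i, 1 ≤ i → i ≤ n → T (3 * n + i) = b (n - i)) := by
  have hlo : ∀ k, 1 ≤ k → k ≤ 3 * n → 2 * M ≤ w k ∧ w k ≤ 4 * M := by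
    intro k h1 h3
    rcases Nat.lt_or_ge n k with h | h
    · rcases Nat.lt_or_ge (2 * n) k with h' | h'
      · have e := hw3 (k - 2 * n) (by omega) (by omega)
        rw [show 2 * n + (k - 2 * n) = k by omega] at e
        omega
      · have e := hw2 (k - n) (by omega) (by omega)
        rw [show n + (k - n) = k by omega] at e
        have := ha (n - (k - n)) (by omega)
        omega
    · have e := hw1 k h1 h
      omega
  have hhi : ∀ k, 3 * n < k → k ≤ 4 * n → 0 ≤ w k ∧ w k ≤ M := by
    intro k h1 h3
    have e := hw4 (k - 3 * n) (by omega) (by omega)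
    rw [show 3 * n + (k - 3 * n) = k by omega] at e
    have := hb (n - (k - 3 * n)) (by omega)
    omega
  have key : ∀ j, 1 ≤ j → j ≤ 4 * n → T j = w j := by
    intro j
    induction j using Nat.strong_induction_on with
    | _ j ih =>
      intro h1 h4
      rw [hT j h1 (by omega)]
      apply le_antisymm
      · refine (Finset.inf'_le _ (Finset.mem_Icc.mpr ⟨h1, le_refl j⟩)).trans ?_
        simp [hT0]
      · apply Finset.le_inf'
        intro k hk
        obtain ⟨hk1, hkj⟩ := Finset.mem_Icc.mp hk
        rcases Nat.lt_or_ge k j with h | h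
        · rw [ih (j - k) (by omega) (by omega) (by omega)]
          rcases Nat.lt_or_ge (3 * n) k with c | c
          · have := hw1 (j - k) (by omega) (by omega)
            have := hhi k c (by omega)
            have := hhi j (by omega) h4
            omega
          · rcases Nat.lt_or_ge (3 * n) (j - k) with d | d
            · have := hw1 k (by omega) (by omega)
              have := hhi (j - k) d (by omega)
              have := hhi j (by omega) h4
              omega
            · have := hlo k hk1 c
              have := hlo (j - k) (by omega) d
              rcases Nat.lt_or_ge (3 * n) j with f | f
              · have := hhi j f h4
                omega
              · have := hlo j h1 f
                omega
        · obtain rfl : k = j := by omega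
          simp [hT0]
  refine ⟨?_, ?_, ?_, ?_⟩ <;> intro i h1 h2
  · rw [key _ (by omega) (by omega), hw1 i h1 h2]
  · rw [key _ (by omega) (by omega), hw2 i h1 h2]
  · rw [key _ (by omega) (by omega), hw3 i h1 h2]
  · rw [key _ (by omega) (by omega), hw4 i h1 h2]
end

section
/- Let n ≥ 1, W ≥ 0, and M = 2W+1. Let a = (a_0,…,a_{n−1}) and b = (b_0,…,b_{n−1}) be integer vectors with 2M ≤ a_i ≤ 3M and 0 ≤ b_i ≤ M for all i. Define coin weights w_1,…,w_{6n} by: w_i = 4M for 1 ≤ i ≤ n; w_{n+i} = a_{n−i} for 1 ≤ i ≤ n; w_{2n+i} = 4M for 1 ≤ i ≤ n; w_{3n+i} = b_{n−i} for 1 ≤ i ≤ n; and w_i = 4M for 4n < i ≤ 6n. Let T be the coin-change table for these weights on indices 0,…,6n. Additionally set (a∗b)_{2n−1} := 4M. Then T[4n+i] = (a∗b)_{2n−i} for all i with 1 ≤ i ≤ 2n. -/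
/-- The `(min,+)`-convolution of two vectors of length `n` (entries indexed by
`0,…,n−1`), valued in `WithTop ℤ`:
`(a∗b)_k = min_{0 ≤ i,j ≤ n−1, i+j=k} (a_i + b_j)`
(the minimum over the empty set being `⊤`, which does not occur for
`0 ≤ k ≤ 2n−2`). -/
def minPlusConv (n : ℕ) (a b : ℕ → ℤ) (k : ℕ) : WithTop ℤ :=
  (((Finset.range n) ×ˢ (Finset.range n)).filter (fun p => p.1 + p.2 = k)).inf
    (fun p => ((a p.1 + b p.2 : ℤ) : WithTop ℤ))

/-- In the reduction from `(min,+)`-convolution to the coin change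
problem, with `M = 2W+1`, `2M ≤ a_i ≤ 3M`, `0 ≤ b_i ≤ M`, coin weights
`w = (4M)^n ∘ (a_{n−1},…,a_0) ∘ (4M)^n ∘ (b_{n−1},…,b_0) ∘ (4M)^{2n}`, and the
convention `(a∗b)_{2n−1} := 4M` (the case `i = 1` below), the coin-change table
`T` satisfies `T[4n+i] = (a∗b)_{2n−i}` for all `1 ≤ i ≤ 2n`. -/
theorem stmt_7 (n : ℕ) (hn : 1 ≤ n) (W M : ℤ) (hW : 0 ≤ W) (hM : M = 2 * W + 1)
    (a b : ℕ → ℤ)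
    (ha : ∀ i, i < n → 2 * M ≤ a i ∧ a i ≤ 3 * M)
    (hb : ∀ i, i < n → 0 ≤ b i ∧ b i ≤ M)
    (w : ℕ → ℤ)
    (hw1 : ∀ i, 1 ≤ i → i ≤ n → w i = 4 * M)
    (hw2 : ∀ i, 1 ≤ i → i ≤ n → w (n + i) = a (n - i))
    (hw3 : ∀ i, 1 ≤ i → i ≤ n → w (2 * n + i) = 4 * M)
    (hw4 : ∀ i, 1 ≤ i → i ≤ n → w (3 * n + i) = b (n - i))
    (hw5 : ∀ i, 4 * n < i → i ≤ 6 * n → w i = 4 * M)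
    (T : ℕ → ℤ) (hT0 : T 0 = 0)
    (hT : ∀ j, (hj : 1 ≤ j) → j ≤ 6 * n →
      T j = (Finset.Icc 1 j).inf' (Finset.nonempty_Icc.mpr hj)
        (fun k => T (j - k) + w k)) :
    ∀ i, 1 ≤ i → i ≤ 2 * n →
      ((T (4 * n + i) : ℤ) : WithTop ℤ)
        = if i = 1 then ((4 * M : ℤ) : WithTop ℤ) else minPlusConv n a b (2 * n - i) := by
  have hMpos : 1 ≤ M := by omega
  have lo : ∀ j k, 1 ≤ k → k ≤ j → j ≤ 6 * n → T j ≤ T (j - k) + w k := by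
    intro j k hk hkj hj
    rw [hT j (by omega) hj]
    exact Finset.inf'_le (fun k => T (j - k) + w k) (Finset.mem_Icc.mpr ⟨hk, hkj⟩)
  have att : ∀ j, 1 ≤ j → j ≤ 6 * n → ∃ k, 1 ≤ k ∧ k ≤ j ∧ T j = T (j - k) + w k := by
    intro j hj hj6
    obtain ⟨k, hk, he⟩ := Finset.exists_mem_eq_inf' (Finset.nonempty_Icc.mpr hj)
      (fun k => T (j - k) + w k)
    rw [Finset.mem_Icc] at hk
    exact ⟨k, hk.1, hk.2, by rw [hT j hj hj6, he]⟩
  have wa : ∀ k, n < k → k ≤ 2 * n → w k = a (2 * n - k) := by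
    intro k h1 h2
    have := hw2 (k - n) (by omega) (by omega)
    rwa [show n + (k - n) = k by omega, show n - (k - n) = 2 * n - k by omega] at this
  have wb : ∀ k, 3 * n < k → k ≤ 4 * n → w k = b (4 * n - k) := by
    intro k h1 h2
    have := hw4 (k - 3 * n) (by omega) (by omega)
    rwa [show 3 * n + (k - 3 * n) = k by omega,
      show n - (k - 3 * n) = 4 * n - k by omega] at this
  have wm : ∀ k, 2 * n < k → k ≤ 3 * n → w k = 4 * M := by
    intro k h1 h2
    have := hw3 (k - 2 * n) (by omega) (by omega)
    rwa [show 2 * n + (k - 2 * n) = k by omega] at this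
  have wa' : ∀ k, n < k → k ≤ 2 * n → 2 * M ≤ w k ∧ w k ≤ 3 * M := by
    intro k h1 h2
    rw [wa k h1 h2]; exact ha _ (by omega)
  have wb' : ∀ k, 3 * n < k → k ≤ 4 * n → 0 ≤ w k ∧ w k ≤ M := by
    intro k h1 h2
    rw [wb k h1 h2]; exact hb _ (by omega)
  have w2 : ∀ k, 1 ≤ k → k ≤ 3 * n → 2 * M ≤ w k := by
    intro k h1 h2
    rcases Nat.lt_or_ge n k with h | h
    · rcases Nat.lt_or_ge (2 * n) k with h' | h'
      · have := wm k h' h2; omega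
      · exact (wa' k h h').1
    · have := hw1 k h1 h; omega
  have w4 : ∀ k, 1 ≤ k → k ≤ 4 * n → 0 ≤ w k ∧ w k ≤ 4 * M := by
    intro k h1 h2
    rcases Nat.lt_or_ge n k with h | h
    · rcases Nat.lt_or_ge (2 * n) k with h' | h'
      · rcases Nat.lt_or_ge (3 * n) k with h3 | h3
        · have := wb' k h3 h2; omega
        · have := wm k h' h3; omega
      · have := wa' k h h'; omega
    · have := hw1 k h1 h; omega
  have Tw : ∀ j, 1 ≤ j → j ≤ 4 * n → T j = w j := by
    intro j
    induction j using Nat.strong_induction_on with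
    | _ j ih =>
    intro h1 h4
    have hup := lo j j h1 le_rfl (by omega)
    rw [Nat.sub_self, hT0] at hup
    obtain ⟨k, hk1, hkj, hk⟩ := att j h1 (by omega)
    rcases Nat.lt_or_ge k j with h | h
    · have hr := ih (j - k) (by omega) (by omega) (by omega)
      have hwj := w4 j h1 h4
      have hwk := w4 k hk1 (by omega)
      have hwr := w4 (j - k) (by omega) (by omega)
      rcases Nat.lt_or_ge (3 * n) k with h3 | h3
      · have := hw1 (j - k) (by omega) (by omega); omega
      · rcases Nat.lt_or_ge (3 * n) (j - k) with h5 | h5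
        · have := hw1 k (by omega) (by omega); omega
        · have := w2 k hk1 h3
          have := w2 (j - k) (by omega) h5
          omega
    · have : k = j := by omega
      subst this
      rw [Nat.sub_self, hT0] at hk; omega
  have key : ∀ j, 4 * n < j → j ≤ 6 * n → 4 * M ≤ T j ∨
      ∃ p q, n < p ∧ p ≤ 2 * n ∧ 3 * n < q ∧ q ≤ 4 * n ∧ p + q = j ∧ w p + w q ≤ T j := by
    intro j
    induction j using Nat.strong_induction_on with
    | _ j ih =>
    intro h4 h6
    have nn : ∀ r, r < j → 0 ≤ T r := by
      intro r hr
      rcases Nat.eq_zero_or_pos r with h0 | h0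
      · subst h0; omega
      · rcases Nat.lt_or_ge (4 * n) r with h | h
        · rcases ih r hr h (by omega) with h' | ⟨p, q, hp, hp', hq, hq', -, h'⟩
          · omega
          · have := wa' p hp hp'
            have := wb' q hq hq'
            omega
        · have := w4 r h0 h
          have := Tw r h0 h
          omega
    obtain ⟨k, hk1, hkj, hk⟩ := att j (by omega) h6
    have hnn := nn (j - k) (by omega)
    rcases Nat.lt_or_ge (4 * n) k with c | c
    · left; have := hw5 k c (by omega); omega
    rcases Nat.lt_or_ge (3 * n) k with c3 | c3
    · have hr := Tw (j - k) (by omega) (by omega)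
      have hk0 := wb' k c3 c
      rcases Nat.lt_or_ge n (j - k) with d | d
      · rcases Nat.lt_or_ge (2 * n) (j - k) with d' | d'
        · left; have := wm (j - k) d' (by omega); omega
        · right; exact ⟨j - k, k, d, d', c3, c, by omega, by omega⟩
      · left; have := hw1 (j - k) (by omega) d; omega
    rcases Nat.lt_or_ge (2 * n) k with c2 | c2
    · left; have := wm k c2 c3; omega
    rcases Nat.lt_or_ge n k with c1 | c1
    · have hk0 := wa' k c1 c2
      rcases Nat.lt_or_ge (4 * n) (j - k) with d | d
      · left
        rcases ih (j - k) (by omega) d (by omega) with h' | ⟨p, q, hp, hp', hq, hq', -, h'⟩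
        · omega
        · have := wa' p hp hp'
          have := wb' q hq hq'
          omega
      · have hr := Tw (j - k) (by omega) d
        rcases Nat.lt_or_ge (3 * n) (j - k) with d' | d'
        · right; exact ⟨k, j - k, c1, c2, d', d, by omega, by omega⟩
        · left; have := wm (j - k) (by omega) d'; omega
    · left; have := hw1 k hk1 c1; omega
  intro i hi1 hi2
  have hup := lo (4 * n + i) (4 * n + i) (by omega) le_rfl (by omega)
  rw [Nat.sub_self, hT0, hw5 _ (by omega) (by omega)] at hup
  have hkey := key (4 * n + i) (by omega) (by omega)
  split_ifs with h
  · have : T (4 * n + i) = 4 * M := by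
      rcases hkey with h' | ⟨p, q, hp, hp', hq, hq', hs, h'⟩ <;> omega
    rw [this]
  · unfold minPlusConv
    have le_conv : ∀ x y, x < n → y < n → x + y = 2 * n - i → T (4 * n + i) ≤ a x + b y := by
      intro x y hx hy hxy
      have h1 := lo (4 * n + i) (2 * n - x) (by omega) (by omega) (by omega)
      rw [Tw (4 * n + i - (2 * n - x)) (by omega) (by omega), wa (2 * n - x) (by omega) (by omega),
        wb (4 * n + i - (2 * n - x)) (by omega) (by omega), show 2 * n - (2 * n - x) = x by omega,
        show 4 * n - (4 * n + i - (2 * n - x)) = y by omega] at h1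
      omega
    have conv_le : ∃ x y, x < n ∧ y < n ∧ x + y = 2 * n - i ∧ a x + b y ≤ T (4 * n + i) := by
      rcases hkey with h' | ⟨p, q, hp, hp', hq, hq', hs, h'⟩
      · obtain ⟨x, y, hx, hy, hxy⟩ : ∃ x y, x < n ∧ y < n ∧ x + y = 2 * n - i := by
          rcases Nat.lt_or_ge (2 * n - i) n with g | g
          · exact ⟨2 * n - i, 0, g, by omega, by omega⟩
          · exact ⟨n - 1, n + 1 - i, by omega, by omega, by omega⟩
        refine ⟨x, y, hx, hy, hxy, ?_⟩
        have := ha x hx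
        have := hb y hy
        omega
      · refine ⟨2 * n - p, 4 * n - q, by omega, by omega, by omega, ?_⟩
        rw [← wa p hp hp', ← wb q hq hq']
        exact h'
    apply le_antisymm
    · apply Finset.le_inf
      rintro ⟨x, y⟩ hp
      simp only [Finset.mem_filter, Finset.mem_product, Finset.mem_range] at hp
      exact WithTop.coe_le_coe.mpr (le_conv x y hp.1.1 hp.1.2 hp.2)
    · obtain ⟨x, y, hx, hy, hxy, hle⟩ := conv_le
      refine le_trans (Finset.inf_le (b := (x, y)) ?_) (WithTop.coe_le_coe.mpr hle)
      simp only [Finset.mem_filter, Finset.mem_product, Finset.mem_range]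
      exact ⟨⟨hx, hy⟩, hxy⟩
end

section
/- Let n ≥ 1, W ≥ 1, and let w_1,…,w_n ∈ ℤ satisfy |w_i| ≤ W for all i. Let M be an integer with M ≥ 2nW. For a finite multiset S of elements of {1,…,n}, let d(S) denote the sum of its elements (with multiplicity), w(S) = Σ_{i ∈ S} w_i, and p(S) = Σ_{i ∈ S} (i·M − w_i) (all sums with multiplicity). Then the maximum of p(S) over all multisets S with d(S) ≤ n equals n·M minus the minimum of w(S) over all multisets S with d(S) = n. -/
theorem aux_profit (w : ℕ → ℤ) (M : ℤ) (S : Multiset ℕ) :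
    (S.map (fun i : ℕ => (i : ℤ) * M - w i)).sum = (S.sum : ℤ) * M - (S.map w).sum := by
  induction S using Multiset.induction_on with
  | empty => simp
  | cons a s ih =>
    simp only [Multiset.map_cons, Multiset.sum_cons, ih]
    push_cast
    ring

theorem aux_lower (n : ℕ) (W : ℤ) (hW : 1 ≤ W) (w : ℕ → ℤ)
    (hw : ∀ i, 1 ≤ i → i ≤ n → |w i| ≤ W) (S : Multiset ℕ) :
    (∀ i ∈ S, 1 ≤ i ∧ i ≤ n) → -(W * (S.sum : ℤ)) ≤ (S.map w).sum := by
  induction S using Multiset.induction_on with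
  | empty => simp
  | cons a s ih =>
    intro h
    have h1 := ih (fun i hi => h i (Multiset.mem_cons_of_mem hi))
    obtain ⟨ha, ha'⟩ := h a (Multiset.mem_cons_self a s)
    have h2 := (abs_le.mp (hw a ha ha')).1
    have h3 : (1 : ℤ) ≤ a := by exact_mod_cast ha
    simp only [Multiset.map_cons, Multiset.sum_cons, Nat.cast_add]
    nlinarith

/-- In the reduction from the coin change problem to unbounded
Knapsack, with `|w_i| ≤ W` and `M ≥ 2nW`, and profits `p_i = i·M − w_i`, the
maximum of `p(S) = Σ_{i∈S} (i·M − w_i)` over all multisets `S` of elements of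
`{1,…,n}` with `d(S) = Σ_{i∈S} i ≤ n` equals `n·M` minus the minimum of
`w(S) = Σ_{i∈S} w_i` over all multisets `S` with `d(S) = n`. -/
theorem stmt_10 (n : ℕ) (hn : 1 ≤ n) (W : ℤ) (hW : 1 ≤ W) (w : ℕ → ℤ)
    (hw : ∀ i, 1 ≤ i → i ≤ n → |w i| ≤ W)
    (M : ℤ) (hM : 2 * (n : ℤ) * W ≤ M) :
    sSup {z : ℤ | ∃ S : Multiset ℕ, (∀ i ∈ S, 1 ≤ i ∧ i ≤ n) ∧ S.sum ≤ n ∧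
        (S.map (fun i : ℕ => (i : ℤ) * M - w i)).sum = z}
      = (n : ℤ) * M -
        sInf {z : ℤ | ∃ S : Multiset ℕ, (∀ i ∈ S, 1 ≤ i ∧ i ≤ n) ∧ S.sum = n ∧
          (S.map w).sum = z} := by
  set B : Set ℤ := {z : ℤ | ∃ S : Multiset ℕ, (∀ i ∈ S, 1 ≤ i ∧ i ≤ n) ∧ S.sum = n ∧
          (S.map w).sum = z} with hB
  have hne : B.Nonempty :=
    ⟨_, Multiset.replicate n 1, fun i hi => by
      rw [Multiset.eq_of_mem_replicate hi]; exact ⟨le_rfl, hn⟩, by simp, rfl⟩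
  have hbd : BddBelow B := by
    refine ⟨-(W * (n : ℤ)), ?_⟩
    rintro z ⟨S, hS, hs, rfl⟩
    have := aux_lower n W hW w hw S hS
    rwa [hs] at this
  have hmem : sInf B ∈ B := Int.csInf_mem hne hbd
  apply IsGreatest.csSup_eq
  constructor
  · obtain ⟨S, hS, hs, hz⟩ := hmem
    exact ⟨S, hS, hs.le, by rw [aux_profit, hz, hs]⟩
  · rintro z ⟨S, hS, hs, rfl⟩
    rw [aux_profit]
    obtain ⟨k, hk⟩ := Nat.exists_eq_add_of_le hs
    have hT : (S.map w).sum + k * w 1 ∈ B := by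
      refine ⟨S + Multiset.replicate k 1, ?_, by simp [hk], by simp⟩
      intro i hi
      rcases Multiset.mem_add.mp hi with h | h
      · exact hS i h
      · rw [Multiset.eq_of_mem_replicate h]; exact ⟨le_rfl, hn⟩
    have h1 := csInf_le hbd hT
    have h2 := (abs_le.mp (hw 1 le_rfl hn)).2
    have h3 : (1 : ℤ) ≤ n := by exact_mod_cast hn
    have h4 : w 1 ≤ M := by nlinarith
    have h5 : (n : ℤ) = (S.sum : ℤ) + k := by exact_mod_cast hk
    have h6 : (k : ℤ) * w 1 ≤ k * M := mul_le_mul_of_nonneg_left h4 (by positivity)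
    have h7 : (n : ℤ) * M = (S.sum : ℤ) * M + k * M := by rw [h5]; ring
    linarith
end

section
/- Let M ≥ 2 and W ≥ 1 be integers, let w̃_1,…,w̃_M ∈ ℤ with |w̃_i| ≤ W for all i, and let r̃_1,…,r̃_M ∈ ℤ with |r̃_i| ≤ W for all i. Set C = 3MW. Define weights w′_1,…,w′_{2M+1} by: w′_i = w̃_i for 1 ≤ i ≤ M; w′_{2M+1−i} = −C − r̃_i for 1 ≤ i ≤ M; and w′_{2M+1} = C. For 1 ≤ i ≤ M let T^J[i] denote the minimum of Σ_{k ∈ S} w̃_k over all multisets S of elements of {1,…,M} whose elements sum to i, and let T^K denote the minimum of Σ_{k ∈ S} w′_k over all multisets S of elements of {1,…,2M+1} whose elements sum to 2M+1. Then T^K ≤ −C if and only if there exists i ∈ {1,…,M} with T^J[i] ≤ r̃_i. -/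
theorem aux_lower_s11 (N : ℕ) (f : ℕ → ℤ) (B : ℤ) (hB : 0 ≤ B)
    (hf : ∀ k, 1 ≤ k → k ≤ N → -B ≤ f k) (S : Multiset ℕ)
    (hS : ∀ k ∈ S, 1 ≤ k ∧ k ≤ N) : -(B * (S.sum : ℤ)) ≤ (S.map f).sum := by
  induction S using Multiset.induction_on with
  | empty => simp
  | cons a S ih =>
    have h1 := ih (fun k hk => hS k (Multiset.mem_cons_of_mem hk))
    obtain ⟨ha, hb⟩ := hS a (Multiset.mem_cons_self a S)
    have h2 := hf a ha hb
    have h3 : (1 : ℤ) ≤ a := by exact_mod_cast ha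
    simp only [Multiset.map_cons, Multiset.sum_cons]
    rw [Nat.cast_add]
    nlinarith

theorem aux_min (N : ℕ) (hN : 1 ≤ N) (f : ℕ → ℤ) (n : ℕ) (t : ℤ) :
    sInf {z : ℤ | ∃ S : Multiset ℕ,
        (∀ k ∈ S, 1 ≤ k ∧ k ≤ N) ∧ S.sum = n ∧ (S.map f).sum = z} ≤ t ↔
    ∃ S : Multiset ℕ, (∀ k ∈ S, 1 ≤ k ∧ k ≤ N) ∧ S.sum = n ∧ (S.map f).sum ≤ t := by
  set A := {z : ℤ | ∃ S : Multiset ℕ,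
        (∀ k ∈ S, 1 ≤ k ∧ k ≤ N) ∧ S.sum = n ∧ (S.map f).sum = z} with hA
  have hne : A.Nonempty := by
    refine ⟨_, Multiset.replicate n 1, ?_, ?_, rfl⟩
    · intro k hk
      have := Multiset.eq_of_mem_replicate hk
      omega
    · simp
  have hbdd : BddBelow A := by
    refine ⟨-((∑ k ∈ Finset.range (N + 1), |f k|) * (n : ℤ)), ?_⟩
    rintro z ⟨S, hS, hn, rfl⟩
    rw [← hn]
    refine aux_lower_s11 N f _ (Finset.sum_nonneg fun _ _ => abs_nonneg _) ?_ S hS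
    intro k _ hk
    have h1 : |f k| ≤ ∑ k ∈ Finset.range (N + 1), |f k| :=
      Finset.single_le_sum (f := fun k => |f k|) (fun _ _ => abs_nonneg _)
        (Finset.mem_range.2 (by omega))
    have := neg_abs_le (f k)
    linarith
  constructor
  · intro h
    obtain ⟨S, h1, h2, h3⟩ := Int.csInf_mem hne hbdd
    exact ⟨S, h1, h2, by rw [h3]; exact h⟩
  · rintro ⟨S, h1, h2, h3⟩
    exact (csInf_le hbdd ⟨S, h1, h2, rfl⟩).trans h3

/-- In the reduction of the problem `P` (deciding whether
`T^J[i] ≤ r̃_i` for some `i`) to the coin change problem: with `C = 3MW`,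
weights `w′_i = w̃_i` for `1 ≤ i ≤ M`, `w′_{2M+1−i} = −C − r̃_i` for
`1 ≤ i ≤ M`, and `w′_{2M+1} = C`, letting `T^J[i]` be the minimum weight of a
multiset of `{1,…,M}` summing to `i` and `T^K` the minimum `w′`-weight of a
multiset of `{1,…,2M+1}` summing to `2M+1`, we have `T^K ≤ −C` iff there is
some `i ∈ {1,…,M}` with `T^J[i] ≤ r̃_i`. -/
theorem stmt_11 (M : ℕ) (hM : 2 ≤ M) (W : ℤ) (hW : 1 ≤ W)
    (wt r : ℕ → ℤ)
    (hwt : ∀ i, 1 ≤ i → i ≤ M → |wt i| ≤ W)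
    (hr : ∀ i, 1 ≤ i → i ≤ M → |r i| ≤ W)
    (C : ℤ) (hC : C = 3 * (M : ℤ) * W)
    (w' : ℕ → ℤ)
    (hw'1 : ∀ i, 1 ≤ i → i ≤ M → w' i = wt i)
    (hw'2 : ∀ i, 1 ≤ i → i ≤ M → w' (2 * M + 1 - i) = -C - r i)
    (hw'3 : w' (2 * M + 1) = C)
    (TJ : ℕ → ℤ)
    (hTJ : ∀ i, TJ i = sInf {z : ℤ | ∃ S : Multiset ℕ,
        (∀ k ∈ S, 1 ≤ k ∧ k ≤ M) ∧ S.sum = i ∧ (S.map wt).sum = z})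
    (TK : ℤ)
    (hTK : TK = sInf {z : ℤ | ∃ S : Multiset ℕ,
        (∀ k ∈ S, 1 ≤ k ∧ k ≤ 2 * M + 1) ∧ S.sum = 2 * M + 1 ∧ (S.map w').sum = z}) :
    TK ≤ -C ↔ ∃ i, 1 ≤ i ∧ i ≤ M ∧ TJ i ≤ r i := by
  have hMZ : (2 : ℤ) ≤ M := by exact_mod_cast hM
  have hCpos : 0 < C := by rw [hC]; positivity
  simp only [hTK, hTJ]
  rw [aux_min (2 * M + 1) (by omega)]
  simp only [aux_min M (by omega)]
  constructor
  · rintro ⟨S, hS, hsum, hle⟩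
    by_cases hbig : ∃ k ∈ S, M < k
    · obtain ⟨k, hk, hMk⟩ := hbig
      obtain ⟨T, rfl⟩ := Multiset.exists_cons_of_mem hk
      have hk2 := (hS k hk).2
      simp only [Multiset.map_cons, Multiset.sum_cons] at hsum hle
      have hTle : ∀ j ∈ T, j ≤ T.sum := fun j hj => Multiset.single_le_sum (by simp) j hj
      have hT1 : ∀ j ∈ T, 1 ≤ j := fun j hj => (hS j (Multiset.mem_cons_of_mem hj)).1
      by_cases hk3 : k = 2 * M + 1
      · have hT0 : T = 0 := by
          refine Multiset.eq_zero_of_forall_notMem fun j hj => ?_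
          have := hTle j hj
          have := hT1 j hj
          omega
        subst hT0
        subst hk3
        rw [hw'3] at hle
        simp at hle
        omega
      · refine ⟨2 * M + 1 - k, by omega, by omega, T, ?_, by omega, ?_⟩
        · intro j hj
          have := hTle j hj
          exact ⟨hT1 j hj, by omega⟩
        · have h2 := hw'2 (2 * M + 1 - k) (by omega) (by omega)
          rw [show 2 * M + 1 - (2 * M + 1 - k) = k by omega] at h2
          have h3 : T.map w' = T.map wt := by
            refine Multiset.map_congr rfl fun j hj => hw'1 j (hT1 j hj) ?_
            have := hTle j hj
            omega
          rw [h2, h3] at hle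
          linarith
    · push Not at hbig
      exfalso
      have h1 := aux_lower_s11 M w' W (by omega) (fun k h1 h2 => by
        rw [hw'1 k h1 h2]
        exact (abs_le.1 (hwt k h1 h2)).1) S (fun k hk => ⟨(hS k hk).1, hbig k hk⟩)
      rw [hsum] at h1
      push_cast at h1
      nlinarith
  · rintro ⟨i, hi1, hi2, S, hS, hsum, hle⟩
    refine ⟨(2 * M + 1 - i) ::ₘ S, ?_, ?_, ?_⟩
    · intro k hk
      rcases Multiset.mem_cons.1 hk with h | h
      · omega
      · have := hS k h
        omega
    · rw [Multiset.sum_cons]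
      omega
    · have h3 : S.map w' = S.map wt :=
        Multiset.map_congr rfl fun j hj => hw'1 j (hS j hj).1 (hS j hj).2
      rw [Multiset.map_cons, Multiset.sum_cons, h3, hw'2 i hi1 hi2]
      linarith
end

section
/- Let X be a set, R ⊆ X × X a relation, n ≥ 1, and let ⊥, ⊤ ∈ X and a_1,…,a_n, b_1,…,b_n ∈ X satisfy: (i) (⊥, d) ∈ R for every d ∈ {a_1,…,a_n, b_1,…,b_n, ⊤}; (ii) (d, ⊤) ∈ R for every d ∈ {a_1,…,a_n, b_1,…,b_n}; (iii) (a_i, a_j) ∉ R for all 1 ≤ i < j ≤ n; and (iv) (b_i, b_j) ∉ R for all 1 ≤ i < j ≤ n. Define the sequence x_0 = ⊥, x_i = a_i for 1 ≤ i ≤ n, x_{n+j} = b_j for 1 ≤ j ≤ n, x_{2n+1} = ⊤, and let T be the LWS table on indices 0,…,2n+1 with weights w(i,j) = −1 if (x_i, x_j) ∈ R and w(i,j) = +∞ otherwise. Then T[2n+1] = −3 if there exist i, j ∈ {1,…,n} with (a_i, b_j) ∈ R, and T[2n+1] = −2 otherwise. -/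
/-- In the reduction from `Selection(R)` to `ChainLWS(R)`, with
the sequence `⊥, a_1,…,a_n, b_1,…,b_n, ⊤`, weights `w(i,j) = −1` if
`R(x_i, x_j)` and `+∞` otherwise, and the conditions (i)–(iv), the LWS table
satisfies `T[2n+1] = −3` if some pair `(a_i, b_j) ∈ R` exists, and
`T[2n+1] = −2` otherwise. -/
theorem stmt_12 {X : Type*} (R : X → X → Prop) (n : ℕ) (hn : 1 ≤ n)
    (bot top : X) (a b : ℕ → X)
    (hbota : ∀ i, 1 ≤ i → i ≤ n → R bot (a i))
    (hbotb : ∀ j, 1 ≤ j → j ≤ n → R bot (b j))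
    (hbottop : R bot top)
    (hatop : ∀ i, 1 ≤ i → i ≤ n → R (a i) top)
    (hbtop : ∀ j, 1 ≤ j → j ≤ n → R (b j) top)
    (hna : ∀ i j, 1 ≤ i → i < j → j ≤ n → ¬ R (a i) (a j))
    (hnb : ∀ i j, 1 ≤ i → i < j → j ≤ n → ¬ R (b i) (b j))
    (x : ℕ → X)
    (hx0 : x 0 = bot)
    (hxa : ∀ i, 1 ≤ i → i ≤ n → x i = a i)
    (hxb : ∀ j, 1 ≤ j → j ≤ n → x (n + j) = b j)
    (hxtop : x (2 * n + 1) = top)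
    (w : ℕ → ℕ → WithTop ℤ)
    (hwR : ∀ i j, R (x i) (x j) → w i j = ((-1 : ℤ) : WithTop ℤ))
    (hwN : ∀ i j, ¬ R (x i) (x j) → w i j = ⊤)
    (T : ℕ → WithTop ℤ) (hT0 : T 0 = 0)
    (hT : ∀ j, 1 ≤ j → j ≤ 2 * n + 1 →
      T j = (Finset.range j).inf (fun i => T i + w i j)) :
    ((∃ i j, 1 ≤ i ∧ i ≤ n ∧ 1 ≤ j ∧ j ≤ n ∧ R (a i) (b j)) →
        T (2 * n + 1) = ((-3 : ℤ) : WithTop ℤ)) ∧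
    (¬ (∃ i j, 1 ≤ i ∧ i ≤ n ∧ 1 ≤ j ∧ j ≤ n ∧ R (a i) (b j)) →
        T (2 * n + 1) = ((-2 : ℤ) : WithTop ℤ)) := by
  have up : ∀ i j (c : ℤ), i < j → j ≤ 2 * n + 1 → R (x i) (x j) →
      T i ≤ ((c + 1 : ℤ) : WithTop ℤ) → T j ≤ (c : WithTop ℤ) := by
    intro i j c hij hj hR hi
    rw [hT j (by omega) hj]
    refine (Finset.inf_le (Finset.mem_range.2 hij)).trans ?_
    rw [hwR i j hR]
    refine (add_le_add_left hi _).trans ?_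
    rw [← WithTop.coe_add]
    exact WithTop.coe_le_coe.2 (by omega)
  have low : ∀ j (c : ℤ), 1 ≤ j → j ≤ 2 * n + 1 →
      (∀ i, i < j → R (x i) (x j) → ((c + 1 : ℤ) : WithTop ℤ) ≤ T i) →
      (c : WithTop ℤ) ≤ T j := by
    intro j c h1 hj h
    rw [hT j h1 hj]
    refine Finset.le_inf fun i hi => ?_
    have hij := Finset.mem_range.1 hi
    by_cases hR : R (x i) (x j)
    · rw [hwR i j hR]
      refine le_trans ?_ (add_le_add_left (h i hij hR) _)
      rw [← WithTop.coe_add]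
      exact WithTop.coe_le_coe.2 (by omega)
    · rw [hwN i j hR]
      simp
  have le0 : ∀ c : ℤ, c ≤ 0 → (c : WithTop ℤ) ≤ T 0 := by
    intro c hc
    rw [hT0]
    exact_mod_cast hc
  have ge0 : T 0 ≤ ((0 : ℤ) : WithTop ℤ) := by
    rw [hT0]; rfl
  have lowa : ∀ i, 1 ≤ i → i ≤ n → ((-1 : ℤ) : WithTop ℤ) ≤ T i := by
    intro i h1 h2
    refine low i _ h1 (by omega) fun k hk hR => ?_
    rcases Nat.eq_zero_or_pos k with rfl | hk0
    · exact le0 _ (by omega)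
    · rw [hxa k hk0 (by omega), hxa i h1 h2] at hR
      exact absurd hR (hna k i hk0 hk h2)
  have lowb : ∀ (c : ℤ) j, c ≤ -1 → 1 ≤ j → j ≤ n →
      (∀ i, 1 ≤ i → i ≤ n → R (a i) (b j) → c + 1 ≤ -1) →
      (c : WithTop ℤ) ≤ T (n + j) := by
    intro c j hc h1 h2 h
    refine low (n + j) _ (by omega) (by omega) fun k hk hR => ?_
    rw [hxb j h1 h2] at hR
    rcases Nat.eq_zero_or_pos k with rfl | hk0
    · exact le0 _ (by omega)
    · by_cases hkn : k ≤ n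
      · rw [hxa k hk0 hkn] at hR
        exact (WithTop.coe_le_coe.2 (h k hk0 hkn hR)).trans (lowa k hk0 hkn)
      · obtain ⟨m, rfl⟩ : ∃ m, k = n + m := ⟨k - n, by omega⟩
        rw [hxb m (by omega) (by omega)] at hR
        exact absurd hR (hnb m j (by omega) (by omega) h2)
  have lowt : ∀ c : ℤ, c ≤ -1 → (∀ j, 1 ≤ j → j ≤ n → (c : WithTop ℤ) ≤ T (n + j)) →
      ((c - 1 : ℤ) : WithTop ℤ) ≤ T (2 * n + 1) := by
    intro c hc h
    refine low _ _ (by omega) le_rfl fun k hk hR => ?_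
    rw [sub_add_cancel]
    rcases Nat.eq_zero_or_pos k with rfl | hk0
    · exact le0 _ (by omega)
    · by_cases hkn : k ≤ n
      · exact (WithTop.coe_le_coe.2 hc).trans (lowa k hk0 hkn)
      · obtain ⟨m, rfl⟩ : ∃ m, k = n + m := ⟨k - n, by omega⟩
        exact h m (by omega) (by omega)
  have upa : ∀ i, 1 ≤ i → i ≤ n → T i ≤ ((-1 : ℤ) : WithTop ℤ) := by
    intro i h1 h2
    refine up 0 i (-1) (by omega) (by omega) ?_ ge0
    rw [hx0, hxa i h1 h2]
    exact hbota i h1 h2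
  constructor
  · rintro ⟨i, j, hi1, hi2, hj1, hj2, hR⟩
    apply le_antisymm
    · refine up (n + j) _ (-3) (by omega) le_rfl ?_ ?_
      · rw [hxb j hj1 hj2, hxtop]
        exact hbtop j hj1 hj2
      · have e1 : (-3 + 1 : ℤ) = -2 := by norm_num
        have e2 : (-2 + 1 : ℤ) = -1 := by norm_num
        rw [e1]
        refine up i (n + j) (-2) (by omega) (by omega) ?_ (by rw [e2]; exact upa i hi1 hi2)
        rw [hxb j hj1 hj2, hxa i hi1 hi2]
        exact hR
    · exact lowt (-2) (by omega) fun j h1 h2 =>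
        lowb (-2) j (by omega) h1 h2 fun _ _ _ _ => by omega
  · intro hno
    apply le_antisymm
    · refine up 1 _ (-2) (by omega) le_rfl ?_ (upa 1 le_rfl hn)
      rw [hxa 1 le_rfl hn, hxtop]
      exact hatop 1 le_rfl hn
    · exact lowt (-1) (by omega) fun j h1 h2 =>
        lowb (-1) j (by omega) h1 h2 fun i hi1 hi2 hR =>
          absurd ⟨i, j, hi1, hi2, h1, h2, hR⟩ hno
end
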